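/- Let v be a real-valued random variable with values in [vmin, vmax] where 0 ≤ vmin < vmax. The function φ(t) := E[max(0, v − t)] − max(0, E[v] − t) is nondecreasing on [vmin, E[v]] and nonincreasing on [E[v], vmax]; hence its maximum over t ∈ [vmin, vmax] is attained at t = E[v] and equals E[max(0, v − E[v])]. -/

import Mathlib

open MeasureTheory Set

/-- The function `φ(t) := E[max(0, v − t)] − max(0, E[v] − t)` is nondecreasing
on `[vmin, E[v]]` and nonincreasing on `[E[v], vmax]`; hence its maximum over
`t ∈ [vmin, vmax]` is attained at `t = E[v]` and equals `E[max(0, v − E[v])]`. -/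
theorem net_utility_unimodal
    {Ω : Type*} [MeasurableSpace Ω] (μ : Measure Ω) [IsProbabilityMeasure μ]
    (vmin vmax : ℝ) (h0 : 0 ≤ vmin) (h1 : vmin < vmax)
    (v : Ω → ℝ) (hv : ∀ ω, v ω ∈ Icc vmin vmax) (hmv : Measurable v)
    (φ : ℝ → ℝ)
    (hφ : φ = fun t => (∫ ω, max 0 (v ω - t) ∂μ) - max 0 ((∫ ω, v ω ∂μ) - t)) :
    MonotoneOn φ (Icc vmin (∫ ω, v ω ∂μ)) ∧
    AntitoneOn φ (Icc (∫ ω, v ω ∂μ) vmax) ∧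
    (∀ t ∈ Icc vmin vmax, φ t ≤ φ (∫ ω, v ω ∂μ)) ∧
    φ (∫ ω, v ω ∂μ) = ∫ ω, max 0 (v ω - ∫ ω', v ω' ∂μ) ∂μ := by
  have hint : Integrable v μ :=
    Integrable.of_mem_Icc vmin vmax hmv.aemeasurable (Filter.Eventually.of_forall hv)
  have hI : ∀ t : ℝ, Integrable (fun ω => max 0 (v ω - t)) μ := fun t =>
    (integrable_const (0 : ℝ)).sup (hint.sub (integrable_const t))
  have hA : ∀ s t : ℝ, s ≤ t →
      (∫ ω, max 0 (v ω - t) ∂μ) ≤ ∫ ω, max 0 (v ω - s) ∂μ := by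
    intro s t hst
    refine integral_mono (hI t) (hI s) fun ω => ?_
    exact max_le_max le_rfl (by linarith)
  have hB : ∀ s t : ℝ, s ≤ t →
      (∫ ω, max 0 (v ω - s) ∂μ) ≤ (∫ ω, max 0 (v ω - t) ∂μ) + (t - s) := by
    intro s t hst
    have h : (∫ ω, max 0 (v ω - s) ∂μ) ≤ ∫ ω, (max 0 (v ω - t) + (t - s)) ∂μ := by
      refine integral_mono (hI s) ((hI t).add (integrable_const _)) fun ω => ?_
      have a := le_max_left 0 (v ω - t)
      have b := le_max_right 0 (v ω - t)
      exact max_le (by linarith) (by linarith)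
    rw [integral_add (hI t) (integrable_const _)] at h
    simpa using h
  have hmono : MonotoneOn φ (Icc vmin (∫ ω, v ω ∂μ)) := by
    intro s hs t ht hst
    have := hB s t hst
    simp only [hφ]
    rw [max_eq_right (sub_nonneg.2 hs.2), max_eq_right (sub_nonneg.2 ht.2)]
    linarith
  have hanti : AntitoneOn φ (Icc (∫ ω, v ω ∂μ) vmax) := by
    intro s hs t ht hst
    have := hA s t hst
    simp only [hφ]
    rw [max_eq_left (sub_nonpos.2 hs.1), max_eq_left (sub_nonpos.2 ht.1)]
    linarith
  refine ⟨hmono, hanti, ?_, ?_⟩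
  · intro t ht
    rcases le_total t (∫ ω, v ω ∂μ) with h | h
    · exact hmono ⟨ht.1, h⟩ ⟨ht.1.trans h, le_rfl⟩ h
    · exact hanti ⟨le_rfl, h.trans ht.2⟩ ⟨h, ht.2⟩ h
  · simp [hφ]
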